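/- Let f ∈ BV(ℝ) and let (f_j) ⊂ BV(ℝ) with ‖f_j − f‖_{BV} → 0. Then for every ε > 0 there exist −∞ < a < b < ∞ such that ∫_{ℝ∖(a,b)} |(M̃f)'| < ε and, for all sufficiently large j, ∫_{ℝ∖(a,b)} |(M̃f_j)'| < ε. -/

import Mathlib

open MeasureTheory Filter Set Topology

/-- Average of |f| over the interval (a,b). -/
noncomputable def mAvg (f : ℝ → ℝ) (a b : ℝ) : ℝ := (∫ t in a..b, |f t|) / (b - a)

/-- Uncentered Hardy–Littlewood maximal function. -/
noncomputable def uMax (f : ℝ → ℝ) (x : ℝ) : ℝ :=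
  sSup {y | ∃ a b : ℝ, a < b ∧ a ≤ x ∧ x ≤ b ∧ y = mAvg f a b}

/-- f has bounded variation on ℝ. -/
def BVfun (f : ℝ → ℝ) : Prop := BoundedVariationOn f Set.univ

/-- Total variation of f over a set, as a real number. -/
noncomputable def varOn (f : ℝ → ℝ) (s : Set ℝ) : ℝ := (eVariationOn f s).toReal

/-- BV norm: |f(-∞)| + Var(f). -/
noncomputable def bvNorm (f : ℝ → ℝ) : ℝ :=
  |limUnder Filter.atBot f| + varOn f Set.univ

/-- Upper precise representative: limsup over intervals I ∋ x with |I| → 0 of averages of |f|. -/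
noncomputable def ubar (f : ℝ → ℝ) (x : ℝ) : ℝ :=
  ⨅ h : {h : ℝ // 0 < h},
    sSup {y | ∃ a b : ℝ, a < b ∧ a ≤ x ∧ x ≤ b ∧ b - a ≤ h.1 ∧ y = mAvg f a b}

/-- The open "interval" (a,b) in ℝ with extended-real endpoints. -/
noncomputable def erealIoo (a b : EReal) : Set ℝ := {x : ℝ | a < (x : EReal) ∧ (x : EReal) < b}

/-- Value of g at an extended-real point, understood as a limit at ±∞. -/
noncomputable def valAt (g : ℝ → ℝ) (a : EReal) : ℝ :=
  if a = ⊥ then limUnder Filter.atBot g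
  else if a = ⊤ then limUnder Filter.atTop g
  else g a.toReal

/-- An abstract form of the variation bound for maximal functions: a function `F` whose strict
interior peaks are matched by large values of `G`, and whose values are matched from above by nearby
values of `G`, has variation at most that of `G`, up to twice its oscillation. -/
lemma sum_abs_sub_le_of_peaks {D : Set ℝ} {F G v : ℝ → ℝ} {V K : ℝ}
    (hv0 : ∀ z ∈ D, 0 ≤ v z) (hvV : ∀ z ∈ D, v z ≤ V)
    (hv : ∀ z ∈ D, ∀ w ∈ D, z ≤ w → |G w - G z| ≤ v w - v z)
    (hK : ∀ x ∈ D, ∀ y ∈ D, F x - F y ≤ K)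
    (hlow : ∀ x ∈ D, ∀ y, x < y → ∀ δ > 0, ∃ z ∈ D, x < z ∧ z < y ∧ G z ≤ F x + δ)
    (hhigh : ∀ x ∈ D, ∀ y ∈ D, ∀ w ∈ D, x < y → y < w → F x < F y → F w < F y →
      ∀ δ > 0, ∃ z ∈ D, x < z ∧ z < w ∧ F y - δ ≤ G z)
    {u : ℕ → ℝ} (hu : Monotone u) (huD : ∀ i, u i ∈ D) (n : ℕ) :
    ∑ i ∈ Finset.range n, |F (u (i + 1)) - F (u i)| ≤ V + 2 * K := by
  have hK0 : 0 ≤ K := by simpa using hK _ (huD 0) _ (huD 0)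
  have invariant : ∀ δ > 0, ∀ n : ℕ, ∃ m ∈ D, ∃ C : ℝ, m ≤ u n ∧ F m ≤ F (u n) ∧
      ∑ i ∈ Finset.range n, |F (u (i + 1)) - F (u i)| ≤ C - 2 * F m + F (u n) ∧
      (C ≤ F (u 0) ∨ ∃ z ∈ D, z < m ∧ C ≤ v z + G z + K + 4 * δ * n) := by
    intro δ hδ n
    induction n with
    | zero => exact ⟨u 0, huD 0, F (u 0), le_rfl, le_rfl, by simp; linarith, Or.inl le_rfl⟩
    | succ n ih =>
      obtain ⟨m, hm, C, hmu, hFm, hS, hC⟩ := ih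
      have hun : u n ≤ u (n + 1) := hu n.le_succ
      rw [Finset.sum_range_succ]
      push_cast
      rcases le_or_gt (F (u n)) (F (u (n + 1))) with hup | hdown
      · refine ⟨m, hm, C, hmu.trans hun, hFm.trans hup, ?_, hC.imp_right ?_⟩
        · rw [abs_of_nonneg (by linarith)]; linarith
        · rintro ⟨z, hz, hzm, h⟩
          exact ⟨z, hz, hzm, by linarith⟩
      · have hlt : u n < u (n + 1) := hun.lt_of_ne fun h => by rw [h] at hdown; exact hdown.false
        rw [abs_of_neg (by linarith)]
        rcases hFm.eq_or_lt with heq | hFlt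
        · refine ⟨u (n + 1), huD _, C, le_rfl, le_rfl, by linarith, hC.imp_right ?_⟩
          rintro ⟨z, hz, hzm, h⟩
          exact ⟨z, hz, hzm.trans_le (hmu.trans hun), by linarith⟩
        · have hmlt : m < u n := hmu.lt_of_ne fun h => by rw [h] at hFlt; exact hFlt.false
          have key : ∃ z₂ ∈ D, z₂ < u (n + 1) ∧
              C - 2 * F m + 2 * F (u n) ≤ v z₂ + G z₂ + K + 4 * δ * (n + 1) := by
            obtain ⟨z₂, hz₂, hmz₂, hz₂u, hG₂⟩ :=
              hhigh m hm _ (huD n) _ (huD (n + 1)) hmlt hlt hFlt hdown δ hδ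
            obtain ⟨z₁, hz₁, hmz₁, hz₁₂, hG₁⟩ := hlow m hm z₂ hmz₂ δ hδ
            have h12 := (le_abs_self _).trans (hv z₁ hz₁ z₂ hz₂ hz₁₂.le)
            refine ⟨z₂, hz₂, hz₂u, ?_⟩
            have hnδ : 0 ≤ δ * n := by positivity
            rcases hC with hC | ⟨z, hz, hzm, hC⟩
            · have := hv0 z₁ hz₁
              have := hK _ (huD 0) m hm
              linarith
            · have := (neg_le_abs _).trans (hv z hz z₁ hz₁ (hzm.trans hmz₁).le)
              linarith
          obtain ⟨z₂, hz₂, hz₂u, hz⟩ := key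
          exact ⟨u (n + 1), huD _, C - 2 * F m + 2 * F (u n), le_rfl, le_rfl, by linarith,
            Or.inr ⟨z₂, hz₂, hz₂u, hz⟩⟩
  refine le_of_forall_pos_le_add fun ε hε => ?_
  set δ : ℝ := ε / (4 * n + 1) with hδdef
  have hδ : 0 < δ := by positivity
  have hδε : 4 * δ * n + δ = ε := by rw [hδdef]; field_simp
  obtain ⟨m, hm, C, -, -, hS, hC⟩ := invariant δ hδ n
  have h1 := hK _ (huD n) m hm
  rcases hC with hC | ⟨z, hz, hzm, hC⟩
  · have h2 := hK _ (huD 0) m hm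
    have := (hv0 m hm).trans (hvV m hm)
    linarith
  · obtain ⟨w, hw, hmw, -, hGw⟩ := hlow m hm (m + 1) (by linarith) δ hδ
    have h2 := (neg_le_abs _).trans (hv z hz w hw (hzm.trans hmw).le)
    have := hvV w hw
    linarith

lemma eVariationOn_le_of_peaks {D : Set ℝ} {F G : ℝ → ℝ} {K : ℝ}
    (hG : BoundedVariationOn G D)
    (hK : ∀ x ∈ D, ∀ y ∈ D, F x - F y ≤ K)
    (hlow : ∀ x ∈ D, ∀ y, x < y → ∀ δ > 0, ∃ z ∈ D, x < z ∧ z < y ∧ G z ≤ F x + δ)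
    (hhigh : ∀ x ∈ D, ∀ y ∈ D, ∀ w ∈ D, x < y → y < w → F x < F y → F w < F y →
      ∀ δ > 0, ∃ z ∈ D, x < z ∧ z < w ∧ F y - δ ≤ G z) :
    eVariationOn F D ≤ ENNReal.ofReal ((eVariationOn G D).toReal + 2 * K) := by
  refine iSup_le fun ⟨n, u, hu, huD⟩ => ?_
  simp only [edist_dist, Real.dist_eq]
  rw [← ENNReal.ofReal_sum_of_nonneg fun _ _ => abs_nonneg _]
  refine ENNReal.ofReal_le_ofReal
    (sum_abs_sub_le_of_peaks (v := fun z => (eVariationOn G (D ∩ Iic z)).toReal)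
      (fun _ _ => ENNReal.toReal_nonneg)
      (fun z _ => ENNReal.toReal_mono hG (eVariationOn.mono _ inter_subset_left))
      (fun z hz w hw hzw => ?_) hK hlow hhigh hu huD n)
  have hfin : ∀ {s}, s ⊆ D → eVariationOn G s ≠ ⊤ := fun hs => hG.mono hs
  have hadd : eVariationOn G (D ∩ Iic z) + edist (G w) (G z) ≤ eVariationOn G (D ∩ Iic w) := by
    rw [← eVariationOn.pair]
    refine (eVariationOn.add_le_union G ?_).trans (eVariationOn.mono G ?_)
    · rintro x ⟨-, hx⟩ y (rfl | rfl)
      · exact le_trans hx hzw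
      · exact hx
    · rintro x (⟨hx, hxz⟩ | rfl | rfl)
      · exact ⟨hx, le_trans hxz hzw⟩
      · exact ⟨hw, self_mem_Iic⟩
      · exact ⟨hz, hzw⟩
  have := ENNReal.toReal_mono (hfin inter_subset_left) hadd
  rw [ENNReal.toReal_add (hfin inter_subset_left) (edist_ne_top _ _), edist_dist,
    ENNReal.toReal_ofReal dist_nonneg, Real.dist_eq] at this
  linarith

lemma intervalIntegral_abs_deriv_le {F : ℝ → ℝ} {c d B : ℝ} (hcd : c ≤ d) (hB : 0 ≤ B)
    (hF : eVariationOn F (Icc c d) ≤ ENNReal.ofReal B) :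
    ∫ x in c..d, |deriv F x| ≤ B := by
  have hbv : BoundedVariationOn F (Icc c d) := ne_top_of_le_ne_top ENNReal.ofReal_ne_top hF
  obtain ⟨p, q, hp, hq, hFpq, hvar⟩ :=
    hbv.locallyBoundedVariationOn.exists_monotoneOn_sub_monotoneOn'
  have hp' := (uIcc_of_le hcd).symm ▸ hp
  have hq' := (uIcc_of_le hcd).symm ▸ hq
  have hpint := hp'.intervalIntegrable_deriv
  have hqint := hq'.intervalIntegrable_deriv
  have hpos : ∀ {r : ℝ → ℝ}, MonotoneOn r (Icc c d) → ∀ x ∈ Ioo c d, 0 ≤ deriv r x := by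
    intro r hr x hx
    rw [← derivWithin_of_mem_nhds (Icc_mem_nhds hx.1 hx.2)]
    exact hr.derivWithin_nonneg
  have hdiff : ∀ {r : ℝ → ℝ}, MonotoneOn r (Icc c d) →
      ∀ᵐ x, x ∈ Ioo c d → DifferentiableAt ℝ r x := by
    intro r hr
    filter_upwards [hr.ae_differentiableWithinAt_of_mem] with x hx hxm
    exact (hx (Ioo_subset_Icc_self hxm)).differentiableAt (Icc_mem_nhds hxm.1 hxm.2)
  have hd : ∀ᵐ x, x ≠ d := by simp [ae_iff, measure_singleton]
  have hle : ∫ x in c..d, |deriv F x| ≤ ∫ x in c..d, (deriv p x + deriv q x) := by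
    refine intervalIntegral.integral_mono_ae_restrict hcd ?_ (hpint.add hqint) ?_
    · exact (BoundedVariationOn.intervalIntegrable_deriv ((uIcc_of_le hcd).symm ▸ hbv)).abs
    · rw [EventuallyLE, ae_restrict_iff' measurableSet_Icc]
      have hc : ∀ᵐ x, x ≠ c := by simp [ae_iff, measure_singleton]
      filter_upwards [hdiff hp, hdiff hq, hc, hd] with x hpx hqx hxc hxd hx
      have hx' : x ∈ Ioo c d := ⟨lt_of_le_of_ne hx.1 hxc.symm, lt_of_le_of_ne hx.2 hxd⟩
      rw [hFpq, deriv_sub (hpx hx') (hqx hx')]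
      have h1 := hpos hp x hx'
      have h2 := hpos hq x hx'
      exact abs_le.2 ⟨by linarith, by linarith⟩
  rw [intervalIntegral.integral_add hpint hqint] at hle
  have h1 := hp'.intervalIntegral_deriv_mem_uIcc
  have h2 := hq'.intervalIntegral_deriv_mem_uIcc
  have hcm : c ∈ Icc c d := ⟨le_rfl, hcd⟩
  have hdm : d ∈ Icc c d := ⟨hcd, le_rfl⟩
  rw [uIcc_of_le (by linarith [hp hcm hdm hcd])] at h1
  rw [uIcc_of_le (by linarith [hq hcm hdm hcd])] at h2
  have h3 := hvar c hcm d hdm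
  rw [variationOnFromTo.eq_of_le _ _ hcd, inter_self] at h3
  have h4 := ENNReal.toReal_le_of_le_ofReal hB hF
  linarith [h1.2, h2.2]

lemma integral_compl_Ioo_abs_deriv_le {F : ℝ → ℝ} {a b A B : ℝ} (hab : a < b)
    (hA : 0 ≤ A) (hB : 0 ≤ B)
    (hl : eVariationOn F (Iic a) ≤ ENNReal.ofReal A)
    (hr : eVariationOn F (Ici b) ≤ ENNReal.ofReal B) :
    ∫ x in (Ioo a b)ᶜ, |deriv F x| ≤ A + B := by
  by_cases hint : IntegrableOn (fun x => |deriv F x|) (Ioo a b)ᶜ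
  swap
  · rw [integral_undef hint]; positivity
  have hset : (Ioo a b)ᶜ = Iic a ∪ Ici b := by
    ext x; simp only [mem_compl_iff, mem_Ioo, mem_union, mem_Iic, mem_Ici]; grind
  rw [hset] at hint ⊢
  have hil := hint.left_of_union
  have hir := hint.right_of_union
  have hdisj : Disjoint (Iic a) (Ici b) :=
    Set.disjoint_left.2 fun x (hx : x ≤ a) (hx' : b ≤ x) => by linarith
  rw [setIntegral_union hdisj measurableSet_Ici hil hir, integral_Ici_eq_integral_Ioi]
  refine add_le_add ?_ ?_
  · refine le_of_tendsto (intervalIntegral_tendsto_integral_Iic a hil tendsto_id) ?_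
    filter_upwards [eventually_le_atBot a] with c hc
    exact intervalIntegral_abs_deriv_le hc hA ((eVariationOn.mono F fun x hx => hx.2).trans hl)
  · refine le_of_tendsto (intervalIntegral_tendsto_integral_Ioi b
      (hir.mono_set Ioi_subset_Ici_self) tendsto_id) ?_
    filter_upwards [eventually_ge_atTop b] with c hc
    exact intervalIntegral_abs_deriv_le hc hB ((eVariationOn.mono F fun x hx => hx.1).trans hr)

lemma BVfun.exists_abs_le {h : ℝ → ℝ} (hh : BVfun h) : ∃ C, ∀ x, |h x| ≤ C := by
  refine ⟨|h 0| + (eVariationOn h univ).toReal, fun x => ?_⟩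
  have := BoundedVariationOn.dist_le hh (mem_univ x) (mem_univ 0)
  rw [Real.dist_eq] at this
  linarith [abs_sub_abs_le_abs_sub (h x) (h 0)]

lemma BVfun.intervalIntegrable_abs {h : ℝ → ℝ} (hh : BVfun h) (a b : ℝ) :
    IntervalIntegrable (fun t => |h t|) volume a b := by
  obtain ⟨p, q, hp, hq, rfl⟩ :=
    (BoundedVariationOn.locallyBoundedVariationOn hh).exists_monotoneOn_sub_monotoneOn
  rw [monotoneOn_univ] at hp hq
  exact (hp.intervalIntegrable.sub hq.intervalIntegrable).abs

lemma eVariationOn_abs_le (h : ℝ → ℝ) (s : Set ℝ) :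
    eVariationOn (fun t => |h t|) s ≤ eVariationOn h s := by
  refine iSup_le fun ⟨n, u, hu, hus⟩ => (Finset.sum_le_sum fun i _ => ?_).trans
    (eVariationOn.sum_le (f := h) hu hus (n := n))
  simp only [edist_dist, Real.dist_eq]
  exact ENNReal.ofReal_le_ofReal (abs_abs_sub_abs_le_abs_sub _ _)

lemma eVariationOn_sub_le (h f : ℝ → ℝ) (s : Set ℝ) :
    eVariationOn (h - f) s ≤ eVariationOn h s + eVariationOn f s := by
  refine iSup_le fun ⟨n, u, hu, hus⟩ => ?_
  refine le_trans ?_ (add_le_add (eVariationOn.sum_le (f := h) hu hus (n := n))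
    (eVariationOn.sum_le (f := f) hu hus (n := n)))
  rw [← Finset.sum_add_distrib]
  refine Finset.sum_le_sum fun i _ => ?_
  simp only [edist_dist, Real.dist_eq, Pi.sub_apply]
  rw [← ENNReal.ofReal_add (abs_nonneg _) (abs_nonneg _)]
  refine ENNReal.ofReal_le_ofReal (le_trans (le_of_eq ?_) (abs_sub _ _))
  congr 1
  ring

lemma BVfun.sub {h f : ℝ → ℝ} (hh : BVfun h) (hf : BVfun f) : BVfun (h - f) :=
  ne_top_of_le_ne_top (ENNReal.add_ne_top.2 ⟨hh, hf⟩) (eVariationOn_sub_le h f univ)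

lemma BVfun.abs_le_bvNorm {h : ℝ → ℝ} (hh : BVfun h) (x : ℝ) : |h x| ≤ bvNorm h := by
  have hlim := BoundedVariationOn.tendsto_atBot_limUnder hh
  have hle : |h x - limUnder atBot h| ≤ varOn h univ :=
    le_of_tendsto (tendsto_const_nhds.sub hlim).abs (Eventually.of_forall fun y => by
      rw [← Real.dist_eq]
      exact BoundedVariationOn.dist_le hh (mem_univ x) (mem_univ y))
  have := abs_sub_abs_le_abs_sub (h x) (limUnder atBot h)
  unfold bvNorm
  linarith

lemma mAvg_le_of_forall_le {h : ℝ → ℝ} (hh : BVfun h) {a b c : ℝ} (hab : a < b)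
    (hc : ∀ t ∈ Icc a b, |h t| ≤ c) : mAvg h a b ≤ c := by
  have := intervalIntegral.integral_mono_on hab.le (hh.intervalIntegrable_abs a b)
    (intervalIntegrable_const (c := c)) hc
  rw [intervalIntegral.integral_const, smul_eq_mul] at this
  exact (div_le_iff₀ (by linarith)).2 (by linarith)

lemma le_mAvg_of_forall_le {h : ℝ → ℝ} (hh : BVfun h) {a b c : ℝ} (hab : a < b)
    (hc : ∀ t ∈ Ioo a b, c ≤ |h t|) : c ≤ mAvg h a b := by
  have := intervalIntegral.integral_mono_on_of_le_Ioo hab.le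
    (intervalIntegrable_const (c := c)) (hh.intervalIntegrable_abs a b) hc
  rw [intervalIntegral.integral_const, smul_eq_mul] at this
  exact (le_div_iff₀ (by linarith)).2 (by linarith)

lemma mAvg_le_uMax {h : ℝ → ℝ} (hh : BVfun h) {a b x : ℝ} (hab : a < b) (hax : a ≤ x)
    (hxb : x ≤ b) : mAvg h a b ≤ uMax h x := by
  obtain ⟨C, hC⟩ := hh.exists_abs_le
  refine le_csSup ⟨C, ?_⟩ ⟨a, b, hab, hax, hxb, rfl⟩
  rintro _ ⟨a, b, hab, -, -, rfl⟩
  exact mAvg_le_of_forall_le hh hab fun t _ => hC t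

lemma uMax_le {h : ℝ → ℝ} {x c : ℝ}
    (hc : ∀ a b, a < b → a ≤ x → x ≤ b → mAvg h a b ≤ c) : uMax h x ≤ c := by
  refine csSup_le ⟨_, x, x + 1, by linarith, le_rfl, by linarith, rfl⟩ ?_
  rintro _ ⟨a, b, hab, hax, hxb, rfl⟩
  exact hc a b hab hax hxb

lemma exists_lt_mAvg {h : ℝ → ℝ} {x c : ℝ} (hc : c < uMax h x) :
    ∃ a b, a < b ∧ a ≤ x ∧ x ≤ b ∧ c < mAvg h a b := by
  by_contra! hcon
  exact hc.not_ge (uMax_le hcon)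

lemma uMax_le_add {h f : ℝ → ℝ} (hh : BVfun h) (hf : BVfun f) {η : ℝ}
    (hhf : ∀ t, |h t - f t| ≤ η) (x : ℝ) : uMax h x ≤ uMax f x + η := by
  refine uMax_le fun a b hab hax hxb => ?_
  refine le_trans ?_ (add_le_add_left (mAvg_le_uMax hf hab hax hxb) η)
  have := intervalIntegral.integral_mono_on hab.le (hh.intervalIntegrable_abs a b)
    ((hf.intervalIntegrable_abs a b).add (intervalIntegrable_const (c := η)))
    fun t _ => by linarith [hhf t, abs_sub_abs_le_abs_sub (h t) (f t)]
  rw [intervalIntegral.integral_add (hf.intervalIntegrable_abs a b) intervalIntegrable_const,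
    intervalIntegral.integral_const, smul_eq_mul] at this
  have hba : 0 < b - a := by linarith
  unfold mAvg
  rw [div_add' _ _ _ hba.ne']
  gcongr
  linarith

lemma exists_abs_le_uMax_add {h : ℝ → ℝ} (hh : BVfun h) {x y δ : ℝ} (hxy : x < y) (hδ : 0 < δ) :
    ∃ z, x < z ∧ z < y ∧ |h z| ≤ uMax h x + δ := by
  by_contra! hcon
  have h1 := le_mAvg_of_forall_le hh hxy fun t ht => (hcon t ht.1 ht.2).le
  linarith [mAvg_le_uMax hh hxy le_rfl hxy.le]

lemma exists_le_abs_of_peak {h : ℝ → ℝ} (hh : BVfun h) {x y w δ : ℝ}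
    (hxy : x < y) (hyw : y < w) (hx : uMax h x < uMax h y) (hw : uMax h w < uMax h y)
    (hδ : 0 < δ) : ∃ z, x < z ∧ z < w ∧ uMax h y - δ ≤ |h z| := by
  obtain ⟨a, b, hab, hay, hyb, hlt⟩ :=
    exists_lt_mAvg (max_lt (max_lt hx hw) (sub_lt_self (uMax h y) hδ))
  obtain ⟨hlt', hlt₃⟩ := max_lt_iff.1 hlt
  obtain ⟨hlt₁, hlt₂⟩ := max_lt_iff.1 hlt'
  have hxa : x < a := by
    by_contra! hax
    exact hlt₁.not_ge (mAvg_le_uMax hh hab hax (hxy.le.trans hyb))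
  have hbw : b < w := by
    by_contra! hwb
    exact hlt₂.not_ge (mAvg_le_uMax hh hab (hay.trans hyw.le) hwb)
  by_contra! hcon
  exact hlt₃.not_ge (mAvg_le_of_forall_le hh hab fun t ht =>
    (hcon t (hxa.trans_le ht.1) (ht.2.trans_lt hbw)).le)

lemma eVariationOn_uMax_le {h : ℝ → ℝ} (hh : BVfun h) {D : Set ℝ} (hD : IsOpen D)
    (hDc : D.OrdConnected) {K : ℝ} (hK : ∀ x ∈ D, ∀ y ∈ D, uMax h x - uMax h y ≤ K) :
    eVariationOn (uMax h) D ≤ ENNReal.ofReal ((eVariationOn h D).toReal + 2 * K) := by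
  have hhD : BoundedVariationOn h D := hh.mono (subset_univ D)
  have hle := eVariationOn_abs_le h D
  refine (eVariationOn_le_of_peaks (G := fun t => |h t|) (ne_top_of_le_ne_top hhD hle) hK ?_
    ?_).trans (ENNReal.ofReal_le_ofReal (by gcongr))
  · intro x hx y hxy δ hδ
    obtain ⟨y', hy', hsub⟩ := (mem_nhdsGE_iff_exists_Ico_subset' hxy).1
      (mem_nhdsWithin_of_mem_nhds (hD.mem_nhds hx))
    obtain ⟨z, hxz, hzy, hz⟩ := exists_abs_le_uMax_add hh (lt_min hxy hy') hδ
    exact ⟨z, hsub ⟨hxz.le, hzy.trans_le (min_le_right _ _)⟩, hxz,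
      hzy.trans_le (min_le_left _ _), hz⟩
  · intro x hx y hy w hw hxy hyw h1 h2 δ hδ
    obtain ⟨z, hxz, hzw, hz⟩ := exists_le_abs_of_peak hh hxy hyw h1 h2 hδ
    exact ⟨z, hDc.out hx hw ⟨hxz.le, hzw.le⟩, hxz, hzw, hz⟩

lemma le_of_forall_mul_le {s F N y : ℝ} (h : ∀ r ≥ N, s * (r - N) ≤ F * (r - y)) : s ≤ F := by
  by_contra! hlt
  have h1 := h (max N ((s * N - F * y) / (s - F) + 1)) (le_max_left _ _)
  have h2 := le_max_right N ((s * N - F * y) / (s - F) + 1)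
  have h3 : (s * N - F * y) / (s - F) < max N ((s * N - F * y) / (s - F) + 1) := by linarith
  rw [div_lt_iff₀ (by linarith)] at h3
  linarith

lemma le_uMax_of_le_atTop {h : ℝ → ℝ} (hh : BVfun h) {s N : ℝ} (hs : ∀ t ≥ N, s ≤ |h t|)
    (y : ℝ) : s ≤ uMax h y := by
  refine le_of_forall_mul_le (N := max N (y + 1)) (y := y) fun r hr => ?_
  have hNr := (le_max_left _ _).trans hr
  have hyr : y + 1 ≤ r := (le_max_right _ _).trans hr
  have h1 := mAvg_le_uMax hh (show y < r by linarith) le_rfl (by linarith)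
  rw [mAvg, div_le_iff₀ (by linarith)] at h1
  refine le_trans ?_ h1
  have h2 := intervalIntegral.integral_mono_on hr (intervalIntegrable_const (c := s))
    (hh.intervalIntegrable_abs _ _) fun t ht => hs t ((le_max_left _ _).trans ht.1)
  rw [intervalIntegral.integral_const, smul_eq_mul] at h2
  rw [← intervalIntegral.integral_add_adjacent_intervals
    (hh.intervalIntegrable_abs y (max N (y + 1))) (hh.intervalIntegrable_abs _ r)]
  have h3 : 0 ≤ ∫ t in y..max N (y + 1), |h t| :=
    intervalIntegral.integral_nonneg (by linarith [le_max_right N (y + 1)]) fun t _ => abs_nonneg _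
  linarith

lemma BVfun.comp_neg {h : ℝ → ℝ} (hh : BVfun h) : BVfun fun t => h (-t) :=
  ne_top_of_le_ne_top hh (eVariationOn.comp_le_of_antitoneOn h (fun t : ℝ => -t)
    (fun _ _ _ _ hxy => neg_le_neg hxy) (mapsTo_univ _ _))

lemma mAvg_comp_neg (h : ℝ → ℝ) (a b : ℝ) :
    mAvg (fun t => h (-t)) a b = mAvg h (-b) (-a) := by
  unfold mAvg
  rw [intervalIntegral.integral_comp_neg (fun t => |h t|)]
  congr 1
  ring

lemma uMax_comp_neg_le {h : ℝ → ℝ} (hh : BVfun h) (x : ℝ) :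
    uMax (fun t => h (-t)) x ≤ uMax h (-x) := by
  refine uMax_le fun a b hab hax hxb => ?_
  rw [mAvg_comp_neg]
  exact mAvg_le_uMax hh (by linarith) (by linarith) (by linarith)

lemma le_uMax_of_le_atBot {h : ℝ → ℝ} (hh : BVfun h) {s N : ℝ} (hs : ∀ t ≤ N, s ≤ |h t|)
    (y : ℝ) : s ≤ uMax h y := by
  have h1 := le_uMax_of_le_atTop hh.comp_neg (N := -N)
    (fun t ht => hs (-t) (by linarith)) (-y)
  simpa using h1.trans (uMax_comp_neg_le hh (-y))

lemma mAvg_le_of_le_outside {h : ℝ → ℝ} (hh : BVfun h) {s C N : ℝ} (hN : 0 ≤ N) (hs0 : 0 ≤ s)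
    (hC : ∀ t, |h t| ≤ C) (hs : ∀ t, N ≤ |t| → |h t| ≤ s) {a b : ℝ} (hab : a < b) :
    mAvg h a b ≤ s + 2 * N * C / (b - a) := by
  have hba : 0 < b - a := by linarith
  have hC0 : 0 ≤ C := (abs_nonneg _).trans (hC 0)
  have hind : Integrable ((Icc (-N) N).indicator fun _ => C) :=
    (integrable_indicator_iff measurableSet_Icc).2 (integrableOn_const (by simp))
  have h1 : ∫ t in a..b, |h t| ≤ ∫ t in a..b, (s + (Icc (-N) N).indicator (fun _ => C) t) := by
    refine intervalIntegral.integral_mono_on hab.le (hh.intervalIntegrable_abs a b)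
      (intervalIntegrable_const.add hind.intervalIntegrable) fun t _ => ?_
    by_cases ht : t ∈ Icc (-N) N
    · rw [indicator_of_mem ht]; linarith [hC t]
    · rw [indicator_of_notMem ht, add_zero]
      refine hs t (le_of_not_gt fun hlt => ht ?_)
      exact ⟨(abs_lt.1 hlt).1.le, (abs_lt.1 hlt).2.le⟩
  have h2 : ∫ t in a..b, (Icc (-N) N).indicator (fun _ => C) t ≤ 2 * N * C := by
    rw [intervalIntegral.integral_of_le hab.le]
    refine (setIntegral_le_integral hind
      (Eventually.of_forall fun t => indicator_nonneg (fun _ _ => hC0) t)).trans (le_of_eq ?_)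
    rw [integral_indicator measurableSet_Icc, setIntegral_const, smul_eq_mul,
      Real.volume_real_Icc_of_le (by linarith)]
    ring
  rw [intervalIntegral.integral_add intervalIntegrable_const hind.intervalIntegrable,
    intervalIntegral.integral_const, smul_eq_mul] at h1
  unfold mAvg
  rw [div_le_iff₀ hba, add_mul, div_mul_cancel₀ _ hba.ne']
  linarith

lemma exists_forall_uMax_le {h : ℝ → ℝ} (hh : BVfun h) {s N : ℝ} (hN : 0 ≤ N)
    (hs : ∀ t, N ≤ |t| → |h t| ≤ s) {η : ℝ} (hη : 0 < η) :
    ∃ R, ∀ x, R ≤ |x| → uMax h x ≤ s + η := by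
  obtain ⟨C, hC⟩ := hh.exists_abs_le
  have hC0 : 0 ≤ C := (abs_nonneg _).trans (hC 0)
  have hs0 : 0 ≤ s := (abs_nonneg _).trans (hs N (le_abs_self N))
  refine ⟨N + 1 + 2 * N * C / η, fun x hx => uMax_le fun a b hab hax hxb => ?_⟩
  have hq : 0 ≤ 2 * N * C / η := by positivity
  by_cases hfar : ∀ t ∈ Icc a b, N ≤ |t|
  · linarith [mAvg_le_of_forall_le hh hab fun t ht => hs t (hfar t ht)]
  · push Not at hfar
    obtain ⟨t, ht, htN⟩ := hfar
    have hlen : 2 * N * C / η < b - a := by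
      have h1 : |x - t| ≤ b - a := abs_le.2 ⟨by linarith [ht.2], by linarith [ht.1]⟩
      linarith [abs_sub_abs_le_abs_sub x t]
    have hba : 0 < b - a := by linarith
    have h1 := mAvg_le_of_le_outside hh hN hs0 hC hs hab
    have h2 : 2 * N * C / (b - a) ≤ η := by
      rw [div_lt_iff₀ hη] at hlen
      rw [div_le_iff₀ hba]
      linarith
    linarith

lemma exists_uMax_sub_le {f : ℝ → ℝ} (hf : BVfun f) {η : ℝ} (hη : 0 < η) :
    ∃ R, ∀ x y, R ≤ |x| → uMax f x - uMax f y ≤ η := by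
  have htop := (BoundedVariationOn.tendsto_atTop_limUnder hf).abs
  have hbot := (BoundedVariationOn.tendsto_atBot_limUnder hf).abs
  set p := |limUnder atTop f|
  set q := |limUnder atBot f|
  have hη3 : 0 < η / 3 := by positivity
  obtain ⟨N₁, hN₁⟩ := eventually_atTop.1 (htop.eventually (Icc_mem_nhds
    (show p - η / 3 < p by linarith) (show p < p + η / 3 by linarith)))
  obtain ⟨N₂, hN₂⟩ := eventually_atBot.1 (hbot.eventually (Icc_mem_nhds
    (show q - η / 3 < q by linarith) (show q < q + η / 3 by linarith)))
  have hlower : ∀ y, max p q ≤ uMax f y + η / 3 := fun y => max_le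
    (by linarith [le_uMax_of_le_atTop hf (fun t ht => (hN₁ t ht).1) y])
    (by linarith [le_uMax_of_le_atBot hf (fun t ht => (hN₂ t ht).1) y])
  have hupper : ∀ t, max 0 (max N₁ (-N₂)) ≤ |t| → |f t| ≤ max p q + η / 3 := by
    intro t ht
    have h1 : N₁ ≤ |t| := ((le_max_left _ _).trans (le_max_right _ _)).trans ht
    have h2 : -N₂ ≤ |t| := ((le_max_right _ _).trans (le_max_right _ _)).trans ht
    rcases abs_cases t with ⟨h, -⟩ | ⟨h, -⟩
    · linarith [(hN₁ t (h ▸ h1)).2, le_max_left p q]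
    · linarith [(hN₂ t (by linarith)).2, le_max_right p q]
  obtain ⟨R, hR⟩ := exists_forall_uMax_le hf (le_max_left _ _) hupper hη3
  exact ⟨R, fun x y hx => by linarith [hR x hx, hlower y]⟩

lemma eVariationOn_uMax_le_of_close {f h : ℝ → ℝ} (hf : BVfun f) (hh : BVfun h) {D : Set ℝ}
    (hD : IsOpen D) (hDc : D.OrdConnected) {η : ℝ} (hη : 0 ≤ η)
    (hK : ∀ x ∈ D, ∀ y, uMax f x - uMax f y ≤ η)
    (hV : eVariationOn f D ≤ ENNReal.ofReal η)
    (hclose : ∀ t, |h t - f t| ≤ η) (hvar : varOn (h - f) univ ≤ η) :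
    eVariationOn (uMax h) D ≤ ENNReal.ofReal (8 * η) := by
  have hvar' : eVariationOn (h - f) D ≤ ENNReal.ofReal η :=
    (eVariationOn.mono _ (subset_univ D)).trans
      ((ENNReal.le_ofReal_iff_toReal_le (hh.sub hf) hη).2 hvar)
  have hVh : eVariationOn h D ≤ ENNReal.ofReal (η + η) := by
    rw [ENNReal.ofReal_add hη hη]
    have hhfD : eVariationOn h D ≤ eVariationOn f D + eVariationOn (h - f) D := by
      have hzero : eVariationOn (0 : ℝ → ℝ) D = 0 :=
        eVariationOn.constant_on (subsingleton_singleton.anti (by rintro _ ⟨x, -, rfl⟩; rfl))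
      have hneg := eVariationOn_sub_le 0 (h - f) D
      rw [hzero, zero_add] at hneg
      have hsub := eVariationOn_sub_le f (0 - (h - f)) D
      rw [zero_sub, sub_neg_eq_add, add_sub_cancel] at hsub
      exact hsub.trans (add_le_add_right (by simpa using hneg) _)
    exact hhfD.trans (add_le_add hV hvar')
  refine (eVariationOn_uMax_le hh hD hDc (K := 3 * η) fun x hx y _ => ?_).trans
    (ENNReal.ofReal_le_ofReal ?_)
  · have h1 := uMax_le_add hh hf hclose x
    have h2 := uMax_le_add hf hh (fun t => by rw [abs_sub_comm]; exact hclose t) y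
    linarith [hK x hx y]
  · linarith [ENNReal.toReal_le_of_le_ofReal (by positivity) hVh]

theorem stmt8 (f : ℝ → ℝ) (hf : BVfun f) (fj : ℕ → ℝ → ℝ) (hfj : ∀ j, BVfun (fj j))
    (hconv : Tendsto (fun j => bvNorm (fj j - f)) atTop (𝓝 0))
    (ε : ℝ) (hε : 0 < ε) :
    ∃ a b : ℝ, a < b ∧
      (∫ x in (Set.Ioo a b)ᶜ, |deriv (uMax f) x|) < ε ∧
      ∀ᶠ j in atTop, (∫ x in (Set.Ioo a b)ᶜ, |deriv (uMax (fj j)) x|) < ε := by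
  set η : ℝ := ε / 17 with hηdef
  have hη : 0 < η := by positivity
  have hηpos : 0 < ENNReal.ofReal η := ENNReal.ofReal_pos.2 hη
  obtain ⟨R, hR⟩ := exists_uMax_sub_le hf hη
  have htop := BoundedVariationOn.tendsto_eVariationOn_Ici_zero hf
  have hbot := BoundedVariationOn.tendsto_eVariationOn_Iic_zero hf
  simp only [univ_inter, principal_univ, top_inf_eq] at htop hbot
  obtain ⟨B, hB, hBR⟩ := ((htop.eventually (gt_mem_nhds hηpos)).and
    (eventually_ge_atTop (max R 0))).exists
  obtain ⟨A, hA, hAR⟩ := ((hbot.eventually (gt_mem_nhds hηpos)).and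
    (eventually_le_atBot (-(max R 0)))).exists
  have hR0 := le_max_left R 0
  have h00 := le_max_right R 0
  have tail : ∀ h, BVfun h → (∀ t, |h t - f t| ≤ η) → varOn (h - f) univ ≤ η →
      ∫ x in (Ioo (A - 1) (B + 1))ᶜ, |deriv (uMax h) x| < ε := by
    intro h hh hclose hvar
    have hl := eVariationOn_uMax_le_of_close hf hh (D := Iio A) isOpen_Iio ordConnected_Iio hη.le
      (fun x (hx : x < A) y => hR x y (by linarith [neg_le_abs x]))
      ((eVariationOn.mono f Iio_subset_Iic_self).trans hA.le) hclose hvar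
    have hr := eVariationOn_uMax_le_of_close hf hh (D := Ioi B) isOpen_Ioi ordConnected_Ioi hη.le
      (fun x (hx : B < x) y => hR x y (by linarith [le_abs_self x]))
      ((eVariationOn.mono f Ioi_subset_Ici_self).trans hB.le) hclose hvar
    have := integral_compl_Ioo_abs_deriv_le (show A - 1 < B + 1 by linarith)
      (by positivity : 0 ≤ 8 * η) (by positivity : 0 ≤ 8 * η)
      ((eVariationOn.mono _ (Iic_subset_Iio.2 (by linarith))).trans hl)
      ((eVariationOn.mono _ (Ici_subset_Ioi.2 (by linarith))).trans hr)
    linarith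
  refine ⟨A - 1, B + 1, by linarith, tail f hf (by simp [hη.le]) ?_, ?_⟩
  · have hzero : eVariationOn (f - f) univ = 0 := eVariationOn.constant_on (by simp)
    simp only [varOn, hzero, ENNReal.toReal_zero, hη.le]
  · filter_upwards [hconv.eventually (gt_mem_nhds hη)] with j hj
    refine tail (fj j) (hfj j) (fun t => ?_) ?_
    · exact (((hfj j).sub hf).abs_le_bvNorm t).trans hj.le
    · exact (le_add_of_nonneg_left (abs_nonneg _)).trans hj.le
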